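/- arXiv:1107.2878 — 2 statements merged into one kernel-verified Lean document; each statement's English description precedes it below -/
import Mathlib

section
/- Let 0 < ν < 1, λ > 0 and t > 0. Then ∫_0^∞ E_{ν,1}(−λ s^ν) · t·e^{−t²/(2s)}/√(2π s³) ds = (sin(νπ)/π) · ∫_0^∞ r^{ν−1} e^{−t √(2 r λ^{1/ν})} / (r^{2ν} + 2 r^ν cos(νπ) + 1) dr, where E_{ν,1}(x) = ∑_{h=0}^∞ x^h/Γ(νh+1). -/
/-!
The proof expresses `E_{ν,1}(-λ s^ν)` as a superposition of exponentials. With `a = λ^(1/ν)` and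
`K(r) = r^(ν-1) / (r^(2ν) + 2 r^ν cos νπ + 1)`, one has

  `E_{ν,1}(-λ s^ν) = (sin νπ / π) ∫_0^∞ K(r) e^{-r a s} dr`   (almost every `s > 0`),

and the theorem follows by Fubini from `E e^{-μ T_t} = e^{-t √(2μ)}` at `μ = r a`.

* The Laplace transform of `T_t` (`laplace_passageDensity`) is read off from an explicit primitive
  built from the Gaussian error function; completing the square gives both exponentials.
* The spectral representation is proved by comparing Laplace transforms in `s`. Termwise
  integration of the series gives `z^(ν-1) / (λ + z^ν)` for `z > a` (`laplace_mittagLeffler`). For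
  the right-hand side Fubini leaves the Stieltjes transform `∫ K(r) / (r + w) dr` with `w = z/a`.
* The Stieltjes transform (`integral_spectralKernel_div`) comes from Cauchy's theorem for
  `(h(ζ) - h(w)) / (ζ - w)` in the upper half plane, where `h(ζ) = ζ^(ν-1) / (1 + ζ^ν)`: on the
  positive axis it is real, on the negative axis its imaginary part is a multiple of
  `K(r) / (r + w)`, and the large half-circle contributes `-iπ h(w)`. In the coordinate
  `ζ = e^s` the half annulus is a rectangle of height `π`.
* Laplace transforms agreeing along an arithmetic progression force almost everywhere equality
  (`ae_eq_zero_of_laplace_eq_zero`), by Weierstrass approximation in the variable `e^{-s}`.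
-/

open MeasureTheory

/-- The Mittag--Leffler function `E_{ν,β}(x) = ∑_{h≥0} x^h/Γ(νh+β)`. -/
noncomputable def mittagLeffler (ν β x : ℝ) : ℝ :=
  ∑' h : ℕ, x ^ h / Real.Gamma (ν * h + β)

open Set Filter Topology

/-! ### The Laplace transform of the first-passage time -/

lemma integral_Ioi_of_hasDerivAt_of_tendsto_nhdsGT {f f' : ℝ → ℝ} {c l : ℝ}
    (hd : ∀ x, 0 < x → HasDerivAt f (f' x) x) (hpos : ∀ x, 0 < x → 0 ≤ f' x)
    (h0 : Tendsto f (𝓝[>] 0) (𝓝 c)) (hl : Tendsto f atTop (𝓝 l)) :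
    IntegrableOn f' (Ioi 0) ∧ ∫ x in Ioi 0, f' x = l - c := by
  have hcont : ContinuousWithinAt (Function.update f 0 c) (Ici 0) 0 := by
    rw [continuousWithinAt_update_same, Ici_sdiff_left]
    exact h0
  have hd' : ∀ x ∈ Ioi (0 : ℝ), HasDerivAt (Function.update f 0 c) (f' x) x := by
    intro x hx
    refine (hd x hx).congr_of_eventuallyEq ?_
    filter_upwards [lt_mem_nhds (show 0 < x from hx)] with y hy
    simp [Function.update_of_ne hy.ne']
  have hl' : Tendsto (Function.update f 0 c) atTop (𝓝 l) := by
    refine hl.congr' ?_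
    filter_upwards [eventually_gt_atTop 0] with y hy
    simp [Function.update_of_ne hy.ne']
  refine ⟨integrableOn_Ioi_deriv_of_nonneg hcont hd' hpos hl', ?_⟩
  rw [integral_Ioi_of_hasDerivAt_of_nonneg hcont hd' hpos hl']
  simp

/-- The primitive, vanishing at the origin, of the unnormalised Gaussian density. -/
noncomputable def gaussPrimitive (x : ℝ) : ℝ := ∫ u in (0 : ℝ)..x, Real.exp (-(1 / 2) * u ^ 2)

lemma hasDerivAt_gaussPrimitive (x : ℝ) :
    HasDerivAt gaussPrimitive (Real.exp (-(1 / 2) * x ^ 2)) x := by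
  have hc : Continuous fun u : ℝ => Real.exp (-(1 / 2) * u ^ 2) := by fun_prop
  exact intervalIntegral.integral_hasDerivAt_right (hc.intervalIntegrable _ _)
    (hc.stronglyMeasurableAtFilter _ _) hc.continuousAt

lemma tendsto_gaussPrimitive_atTop :
    Tendsto gaussPrimitive atTop (𝓝 (Real.sqrt (2 * Real.pi) / 2)) := by
  have h := intervalIntegral_tendsto_integral_Ioi (0 : ℝ)
    ((integrable_exp_neg_mul_sq (b := 1 / 2) (by norm_num)).integrableOn) tendsto_id
  rw [integral_gaussian_Ioi] at h
  have e : Real.pi / (1 / 2) = 2 * Real.pi := by ring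
  rw [e] at h
  exact h

lemma tendsto_gaussPrimitive_atBot :
    Tendsto gaussPrimitive atBot (𝓝 (-(Real.sqrt (2 * Real.pi) / 2))) := by
  have hodd : gaussPrimitive = fun x => -gaussPrimitive (-x) := by
    ext x
    have h := intervalIntegral.integral_comp_neg
      (f := fun u : ℝ => Real.exp (-(1 / 2) * u ^ 2)) (a := 0) (b := x)
    simp only [neg_sq, neg_zero] at h
    rw [gaussPrimitive, gaussPrimitive, h, intervalIntegral.integral_symm]
  rw [hodd]
  exact (tendsto_gaussPrimitive_atTop.comp tendsto_neg_atBot_atTop).neg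

/-- The density `t e^{-t²/(2s)} / √(2πs³)` of the first-passage time at level `t`. -/
noncomputable def passageDensity (t s : ℝ) : ℝ :=
  t * Real.exp (-t ^ 2 / (2 * s)) / Real.sqrt (2 * Real.pi * s ^ 3)

lemma hasDerivAt_passage_primitive (t m s : ℝ) (hs : 0 < s) :
    HasDerivAt (fun s => (Real.exp (-(t * m)) * gaussPrimitive (m * Real.sqrt s - t / Real.sqrt s)
        - Real.exp (t * m) * gaussPrimitive (m * Real.sqrt s + t / Real.sqrt s))
          / Real.sqrt (2 * Real.pi))
      (Real.exp (-(m ^ 2 / 2 * s)) * passageDensity t s) s := by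
  have hq : 0 < Real.sqrt s := Real.sqrt_pos.2 hs
  have hp : 0 < Real.sqrt (2 * Real.pi) := Real.sqrt_pos.2 (by positivity)
  have hsq : Real.sqrt s ^ 2 = s := Real.sq_sqrt hs.le
  have h1 := Real.hasDerivAt_sqrt hs.ne'
  have hm := h1.const_mul m
  have ht : HasDerivAt (fun s => t / Real.sqrt s) (-(t * (1 / (2 * √s))) / (√s) ^ 2) s := by
    exact ((hasDerivAt_const s t).div h1 hq.ne').congr_deriv (by simp)
  have hA := ((hasDerivAt_gaussPrimitive _).comp s (hm.sub ht)).const_mul (Real.exp (-(t * m)))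
  have hB := ((hasDerivAt_gaussPrimitive _).comp s (hm.add ht)).const_mul (Real.exp (t * m))
  refine ((hA.sub hB).div_const (Real.sqrt (2 * Real.pi))).congr_deriv ?_
  -- both Gaussian factors complete the square to the same exponential
  have e1 : Real.exp (-(t * m)) * Real.exp (-(1 / 2) * (m * √s - t / √s) ^ 2)
      = Real.exp (-(m ^ 2 / 2 * s)) * Real.exp (-t ^ 2 / (2 * s)) := by
    rw [← Real.exp_add, ← Real.exp_add]
    congr 1
    generalize √s = q at *
    subst hsq
    field_simp
    ring
  have e2 : Real.exp (t * m) * Real.exp (-(1 / 2) * (m * √s + t / √s) ^ 2)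
      = Real.exp (-(m ^ 2 / 2 * s)) * Real.exp (-t ^ 2 / (2 * s)) := by
    rw [← Real.exp_add, ← Real.exp_add]
    congr 1
    generalize √s = q at *
    subst hsq
    field_simp
    ring
  have e3 : Real.sqrt (2 * Real.pi * s ^ 3) = Real.sqrt (2 * Real.pi) * √s ^ 3 := by
    rw [Real.sqrt_mul (by positivity)]
    congr 1
    have h6 : (√s ^ 3) ^ 2 = s ^ 3 := by rw [← pow_mul, mul_comm, pow_mul, hsq]
    rw [← h6, Real.sqrt_sq (by positivity)]
  simp only [Pi.sub_apply, Pi.add_apply, ← mul_assoc, e1, e2, passageDensity, e3]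
  generalize √s = q at *
  field_simp
  ring

lemma tendsto_sqrt_nhdsGT_zero : Tendsto Real.sqrt (𝓝[>] 0) (𝓝[>] 0) := by
  refine tendsto_nhdsWithin_iff.2 ⟨?_, ?_⟩
  · simpa using (Real.continuous_sqrt.tendsto 0).mono_left nhdsWithin_le_nhds
  · filter_upwards [self_mem_nhdsWithin] with s hs
    exact Real.sqrt_pos.2 hs

/-- The Laplace transform of the first-passage density: `E e^{-(m²/2) T_t} = e^{-tm}`. -/
lemma laplace_passageDensity {t m : ℝ} (ht : 0 < t) (hm : 0 ≤ m) :
    IntegrableOn (fun s => Real.exp (-(m ^ 2 / 2 * s)) * passageDensity t s) (Ioi 0) ∧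
    ∫ s in Ioi 0, Real.exp (-(m ^ 2 / 2 * s)) * passageDensity t s = Real.exp (-(t * m)) := by
  have hp : 0 < Real.sqrt (2 * Real.pi) := Real.sqrt_pos.2 (by positivity)
  set S := Real.sqrt (2 * Real.pi) / 2 with hS
  have hsm : Tendsto (fun s => m * Real.sqrt s) (𝓝[>] 0) (𝓝 0) := by
    simpa using (tendsto_sqrt_nhdsGT_zero.mono_right nhdsWithin_le_nhds).const_mul m
  have hst : Tendsto (fun s => t / Real.sqrt s) (𝓝[>] 0) atTop := by
    simpa [div_eq_mul_inv] using
      (tendsto_inv_nhdsGT_zero.comp tendsto_sqrt_nhdsGT_zero).const_mul_atTop ht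
  have hst' : Tendsto (fun s => t / Real.sqrt s) atTop (𝓝 0) :=
    Real.tendsto_sqrt_atTop.const_div_atTop t
  have z1 : Tendsto (fun s => gaussPrimitive (m * √s - t / √s)) (𝓝[>] 0) (𝓝 (-S)) := by
    refine tendsto_gaussPrimitive_atBot.comp ?_
    simp only [sub_eq_add_neg]
    exact hsm.add_atBot (tendsto_neg_atTop_atBot.comp hst)
  have z2 : Tendsto (fun s => gaussPrimitive (m * √s + t / √s)) (𝓝[>] 0) (𝓝 S) :=
    tendsto_gaussPrimitive_atTop.comp (hsm.add_atTop hst)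
  have h0 := ((z1.const_mul (Real.exp (-(t * m)))).sub
    (z2.const_mul (Real.exp (t * m)))).div_const (Real.sqrt (2 * Real.pi))
  have hpos : ∀ s, 0 < s → 0 ≤ Real.exp (-(m ^ 2 / 2 * s)) * passageDensity t s := by
    intro s hs
    unfold passageDensity
    positivity
  have hd := fun s hs => hasDerivAt_passage_primitive t m s hs
  rcases hm.eq_or_lt with rfl | hm
  · have hg : Continuous gaussPrimitive :=
      continuous_iff_continuousAt.2 fun x => (hasDerivAt_gaussPrimitive x).continuousAt
    have i1 : Tendsto (fun s => gaussPrimitive (0 * √s - t / √s)) atTop (𝓝 0) := by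
      have := (hg.tendsto _).comp hst'.neg
      simpa [gaussPrimitive, Function.comp_def] using this
    have i2 : Tendsto (fun s => gaussPrimitive (0 * √s + t / √s)) atTop (𝓝 0) := by
      have := (hg.tendsto _).comp hst'
      simpa [gaussPrimitive, Function.comp_def] using this
    have hl := ((i1.const_mul (Real.exp (-(t * 0)))).sub
      (i2.const_mul (Real.exp (t * 0)))).div_const (Real.sqrt (2 * Real.pi))
    obtain ⟨hi, he⟩ := integral_Ioi_of_hasDerivAt_of_tendsto_nhdsGT hd hpos h0 hl
    refine ⟨hi, he.trans ?_⟩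
    simp [hS]
    field_simp
    norm_num
  · have hmt : Tendsto (fun s => m * √s) atTop atTop :=
      Real.tendsto_sqrt_atTop.const_mul_atTop hm
    have i1 : Tendsto (fun s => gaussPrimitive (m * √s - t / √s)) atTop (𝓝 S) := by
      refine tendsto_gaussPrimitive_atTop.comp ?_
      simp only [sub_eq_add_neg]
      exact hmt.atTop_add hst'.neg
    have i2 : Tendsto (fun s => gaussPrimitive (m * √s + t / √s)) atTop (𝓝 S) :=
      tendsto_gaussPrimitive_atTop.comp (hmt.atTop_add hst')
    have hl := ((i1.const_mul (Real.exp (-(t * m)))).sub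
      (i2.const_mul (Real.exp (t * m)))).div_const (Real.sqrt (2 * Real.pi))
    obtain ⟨hi, he⟩ := integral_Ioi_of_hasDerivAt_of_tendsto_nhdsGT hd hpos h0 hl
    refine ⟨hi, he.trans ?_⟩
    rw [hS]
    field_simp
    ring

/-! ### The Cauchy theorem in a strip -/

lemma sin_mul_pi_pos {ν : ℝ} (hν0 : 0 < ν) (hν1 : ν < 1) : 0 < Real.sin (ν * Real.pi) :=
  Real.sin_pos_of_pos_of_lt_pi (by positivity) (by nlinarith [Real.pi_pos])

/-- The quadratic `u² + 2u cos(νπ) + 1 = |1 + u e^{iνπ}|²` has no real zero. -/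
lemma quad_pos {ν : ℝ} (hν0 : 0 < ν) (hν1 : ν < 1) (u : ℝ) :
    0 < u ^ 2 + 2 * u * Real.cos (ν * Real.pi) + 1 := by
  nlinarith [sin_mul_pi_pos hν0 hν1, Real.sin_sq_add_cos_sq (ν * Real.pi),
    sq_nonneg (u + Real.cos (ν * Real.pi)), pow_pos (sin_mul_pi_pos hν0 hν1) 2]

section Strip

variable (ν ℓ : ℝ)

/-- The value at `w = e^ℓ` of `w^(ν-1) / (1 + w^ν)`. -/
noncomputable def poleValue : ℝ := Real.exp (ν * ℓ) / (1 + Real.exp (ν * ℓ)) / Real.exp ℓ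

/-- The function `s ↦ e^{νs} / (1 + e^{νs}) - β e^s`, where `β` is chosen so that it vanishes at
`s = ℓ`. -/
noncomputable def stripNum (s : ℂ) : ℂ :=
  Complex.exp (ν * s) / (1 + Complex.exp (ν * s)) - poleValue ν ℓ * Complex.exp s

/-- The quotient `stripNum s / (e^s - e^ℓ)`, with the removable singularity at `s = ℓ` filled in
by writing it as a quotient of two difference quotients. -/
noncomputable def stripFun (s : ℂ) : ℂ :=
  dslope (stripNum ν ℓ) ℓ s / dslope Complex.exp ℓ s

variable {ν ℓ}

lemma stripNum_self : stripNum ν ℓ ℓ = 0 := by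
  have h : stripNum ν ℓ ℓ = ((Real.exp (ν * ℓ) / (1 + Real.exp (ν * ℓ))
      - poleValue ν ℓ * Real.exp ℓ : ℝ) : ℂ) := by
    simp [stripNum]
  rw [h, poleValue, div_mul_cancel₀ _ (Real.exp_pos ℓ).ne', sub_self, Complex.ofReal_zero]

lemma stripFun_of_ne {s : ℂ} (hs : s ≠ ℓ) :
    stripFun ν ℓ s = stripNum ν ℓ s / (Complex.exp s - Complex.exp ℓ) := by
  have h : s - ℓ ≠ 0 := sub_ne_zero.2 hs
  rw [stripFun, dslope_of_ne _ hs, dslope_of_ne _ hs, slope_def_field, slope_def_field,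
    stripNum_self, sub_zero, div_div_div_cancel_right₀ h]

lemma one_add_exp_ne_zero (hν0 : 0 < ν) (hν1 : ν < 1) {s : ℂ} (h0 : 0 ≤ s.im)
    (h1 : s.im ≤ Real.pi) : 1 + Complex.exp (ν * s) ≠ 0 := by
  intro h
  have hre := congrArg Complex.re h
  have him := congrArg Complex.im h
  simp [Complex.exp_re, Complex.exp_im] at hre him
  rcases h0.eq_or_lt with h0 | h0
  · rw [← h0] at hre
    simp at hre
    linarith [Real.exp_pos (ν * s.re)]
  · exact (Real.sin_pos_of_pos_of_lt_pi (by positivity) (by nlinarith [Real.pi_pos])).ne' him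

lemma differentiableOn_stripFun (hν0 : 0 < ν) (hν1 : ν < 1) :
    DifferentiableOn ℂ (stripFun ν ℓ) {s : ℂ | 0 ≤ s.im ∧ s.im ≤ Real.pi} := by
  set U : Set ℂ := {s | 1 + Complex.exp (ν * s) ≠ 0} with hU
  have hUo : IsOpen U := isOpen_ne_fun (by fun_prop) (by fun_prop)
  have hsub : {s : ℂ | 0 ≤ s.im ∧ s.im ≤ Real.pi} ⊆ U := fun s hs =>
    one_add_exp_ne_zero hν0 hν1 hs.1 hs.2
  have hℓ : (ℓ : ℂ) ∈ U := hsub (by simp [Real.pi_pos.le])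
  have hN : DifferentiableOn ℂ (stripNum ν ℓ) U := by
    intro s hs
    have hs' : 1 + Complex.exp (ν * s) ≠ 0 := hs
    refine DifferentiableAt.differentiableWithinAt ?_
    unfold stripNum
    fun_prop (disch := assumption)
  have h1 := ((Complex.differentiableOn_dslope (hUo.mem_nhds hℓ)).2 hN).mono hsub
  have h2 := ((Complex.differentiableOn_dslope (c := (ℓ : ℂ)) (univ_mem)).2
    Complex.differentiable_exp.differentiableOn).mono
      (subset_univ {s : ℂ | 0 ≤ s.im ∧ s.im ≤ Real.pi})
  refine h1.div h2 fun s hs => ?_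
  by_cases hsl : s = ℓ
  · subst hsl
    simp [Complex.exp_ne_zero]
  · rw [dslope_of_ne _ hsl, slope_def_field]
    refine div_ne_zero (sub_ne_zero.2 fun h => hsl ?_) (sub_ne_zero.2 hsl)
    exact Complex.exp_inj_of_neg_pi_lt_of_le_pi (by linarith [hs.1, Real.pi_pos]) hs.2
      (by simp [Real.pi_pos]) (by simp [Real.pi_pos.le]) h

lemma stripFun_bottom_im {x : ℝ} (hx : x ≠ ℓ) : (stripFun ν ℓ x).im = 0 := by
  have h : stripFun ν ℓ x = (((Real.exp (ν * x) / (1 + Real.exp (ν * x))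
      - poleValue ν ℓ * Real.exp x) / (Real.exp x - Real.exp ℓ) : ℝ) : ℂ) := by
    rw [stripFun_of_ne (by exact_mod_cast hx)]
    simp [stripNum]
  rw [h, Complex.ofReal_im]

/-- The integrand of the Stieltjes integral in the logarithmic coordinate `r = e^x`. -/
noncomputable def logKernel (ν ℓ x : ℝ) : ℝ :=
  Real.exp (ν * x) / (Real.exp (ν * x) ^ 2 + 2 * Real.exp (ν * x) * Real.cos (ν * Real.pi) + 1)
    / (Real.exp x + Real.exp ℓ)

lemma stripFun_top_im (hν0 : 0 < ν) (hν1 : ν < 1) (x : ℝ) :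
    (stripFun ν ℓ (x + Real.pi * Complex.I)).im
      = -(Real.sin (ν * Real.pi) * logKernel ν ℓ x) := by
  have hne : (x + Real.pi * Complex.I : ℂ) ≠ ℓ := by
    intro h
    have := congrArg Complex.im h
    simp [Real.pi_ne_zero] at this
  have hden := one_add_exp_ne_zero hν0 hν1 (s := x + Real.pi * Complex.I)
    (by simp [Real.pi_pos.le]) (by simp)
  have hq : Complex.exp (ν * (x + Real.pi * Complex.I)) = (Real.exp (ν * x) : ℝ) *
      ((Real.cos (ν * Real.pi) : ℝ) + (Real.sin (ν * Real.pi) : ℝ) * Complex.I) := by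
    rw [mul_add, Complex.exp_add, ← mul_assoc, Complex.exp_mul_I]
    push_cast
    ring
  have he : Complex.exp (x + Real.pi * Complex.I) = ((-Real.exp x : ℝ) : ℂ) := by
    rw [Complex.exp_add, Complex.exp_pi_mul_I]
    push_cast
    ring
  rw [hq] at hden
  rw [stripFun_of_ne hne, stripNum, hq, he, ← Complex.ofReal_exp ℓ, ← Complex.ofReal_sub,
    Complex.div_ofReal_im, Complex.sub_im, ← Complex.ofReal_mul, Complex.ofReal_im, sub_zero,
    logKernel]
  have hcs := Real.sin_sq_add_cos_sq (ν * Real.pi)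
  have hD := quad_pos hν0 hν1 (Real.exp (ν * x))
  generalize Real.exp (ν * x) = u at *
  generalize Real.cos (ν * Real.pi) = c at *
  generalize Real.sin (ν * Real.pi) = σ at *
  have key : ((u : ℂ) * (c + σ * Complex.I)) / (1 + u * (c + σ * Complex.I))
      = (((u ^ 2 + u * c : ℝ) : ℂ) + (u * σ : ℝ) * Complex.I) / (u ^ 2 + 2 * u * c + 1 : ℝ) := by
    rw [div_eq_div_iff hden (by exact_mod_cast hD.ne')]
    apply Complex.ext
    · simp [pow_two]
      linear_combination u ^ 2 * hcs
    · simp [pow_two]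
      ring
  rw [key, Complex.div_ofReal_im]
  have h3 : (((u ^ 2 + u * c : ℝ) : ℂ) + (u * σ : ℝ) * Complex.I).im = u * σ := by
    rw [Complex.add_im, Complex.ofReal_im, Complex.im_ofReal_mul]; simp
  have h4 : -Real.exp x - Real.exp ℓ = -(Real.exp x + Real.exp ℓ) := by ring
  rw [h3, h4, div_neg]
  ring

/-- The vertical side of the rectangle at abscissa `a`. -/
noncomputable def stripSide (ν ℓ a : ℝ) : ℂ :=
  ∫ y in (0 : ℝ)..Real.pi, stripFun ν ℓ (a + y * Complex.I)

/-- Cauchy's theorem on the rectangle `[-R, R] × [0, π]`: the bottom side contributes a real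
number, so only the top side and the vertical sides are visible in the imaginary part. -/
lemma sin_mul_integral_logKernel (hν0 : 0 < ν) (hν1 : ν < 1) {R : ℝ} :
    Real.sin (ν * Real.pi) * ∫ x in (-R)..R, logKernel ν ℓ x
      = (stripSide ν ℓ (-R)).re - (stripSide ν ℓ R).re := by
  have hdiff := differentiableOn_stripFun (ℓ := ℓ) hν0 hν1
  have H := Complex.integral_boundary_rect_eq_zero_of_differentiableOn (stripFun ν ℓ)
    (-R : ℝ) (R + Real.pi * Complex.I) (hdiff.mono (by
      rintro s ⟨-, hs⟩
      simpa [uIcc_of_le Real.pi_pos.le] using hs))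
  simp only [Complex.ofReal_re, Complex.ofReal_im, Complex.add_re, Complex.add_im,
    Complex.mul_re, Complex.mul_im, Complex.I_re, Complex.I_im, mul_zero, mul_one, sub_zero,
    zero_add, add_zero, zero_mul, Complex.ofReal_zero] at H
  have hci : ∀ y : ℝ, 0 ≤ y → y ≤ Real.pi →
      Continuous fun x : ℝ => stripFun ν ℓ (x + y * Complex.I) := by
    intro y h0 h1
    refine hdiff.continuousOn.comp_continuous (by fun_prop) fun x => ?_
    simp [h0, h1]
  have hb := hci 0 le_rfl Real.pi_pos.le
  have ht := hci Real.pi Real.pi_pos.le le_rfl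
  simp only [Complex.ofReal_zero, zero_mul, add_zero] at hb
  have hbot : (∫ x in (-R)..R, stripFun ν ℓ x).im = 0 := by
    have h := Complex.imCLM.intervalIntegral_comp_comm (hb.intervalIntegrable (μ := volume) (-R) R)
    simp only [Complex.imCLM_apply] at h
    rw [← h]
    refine intervalIntegral.integral_zero_ae ?_
    filter_upwards [compl_mem_ae_iff.2 (measure_singleton ℓ)] with x hx _
    exact stripFun_bottom_im hx
  have htop : (∫ x in (-R)..R, stripFun ν ℓ (x + Real.pi * Complex.I)).im
      = -(Real.sin (ν * Real.pi) * ∫ x in (-R)..R, logKernel ν ℓ x) := by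
    have h := Complex.imCLM.intervalIntegral_comp_comm (ht.intervalIntegrable (μ := volume) (-R) R)
    simp only [Complex.imCLM_apply] at h
    rw [← h]
    simp only [stripFun_top_im hν0 hν1]
    rw [intervalIntegral.integral_neg, intervalIntegral.integral_const_mul]
  have Him := congrArg Complex.im H
  simp only [Complex.sub_im, Complex.add_im, hbot, htop, smul_eq_mul, Complex.mul_im,
    Complex.I_re, Complex.I_im, zero_mul, one_mul, zero_add, Complex.zero_im] at Him
  simp only [stripSide]
  linarith

lemma norm_one_add_exp_ge (s : ℂ) :
    |Real.exp (ν * s.re) - 1| ≤ ‖1 + Complex.exp (ν * s)‖ := by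
  have h := abs_norm_sub_norm_le (Complex.exp (ν * s)) (-1)
  rw [Complex.norm_exp, norm_neg, norm_one, sub_neg_eq_add, add_comm (Complex.exp _)] at h
  simpa using h

lemma norm_exp_sub_exp_ge (s : ℂ) :
    |Real.exp s.re - Real.exp ℓ| ≤ ‖Complex.exp s - Complex.exp ℓ‖ := by
  have h := abs_norm_sub_norm_le (Complex.exp s) (Complex.exp ℓ)
  rw [Complex.norm_exp, Complex.norm_exp] at h
  simpa using h

lemma poleValue_pos : 0 < poleValue ν ℓ := by unfold poleValue; positivity

lemma tendsto_stripSide_atTop (hν0 : 0 < ν) (hν1 : ν < 1) :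
    Tendsto (fun R : ℝ => stripSide ν ℓ R) atTop (𝓝 (-(Real.pi * poleValue ν ℓ : ℝ))) := by
  set β := poleValue ν ℓ with hβ
  have hβ0 : 0 < β := poleValue_pos
  have hb : Tendsto (fun R : ℝ => (2 + β * Real.exp ℓ) / (Real.exp R - Real.exp ℓ) * |Real.pi - 0|)
      atTop (𝓝 0) := by
    have : Tendsto (fun R : ℝ => Real.exp R - Real.exp ℓ) atTop atTop :=
      tendsto_atTop_add_const_right _ _ Real.tendsto_exp_atTop
    simpa using (this.const_div_atTop (2 + β * Real.exp ℓ)).mul_const |Real.pi - 0|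
  rw [tendsto_iff_norm_sub_tendsto_zero]
  refine squeeze_zero' (Eventually.of_forall fun _ => norm_nonneg _) ?_ hb
  have e2 : ∀ᶠ R : ℝ in atTop, 2 ≤ Real.exp (ν * R) :=
    (Real.tendsto_exp_atTop.comp (tendsto_id.const_mul_atTop hν0)).eventually_ge_atTop 2
  filter_upwards [e2, eventually_gt_atTop ℓ] with R h2 hR
  have hlt : Real.exp ℓ < Real.exp R := Real.exp_lt_exp.2 hR
  have hcont : Continuous fun y : ℝ => stripFun ν ℓ (R + (max 0 (min y Real.pi) : ℝ) * Complex.I) :=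
    (differentiableOn_stripFun (ℓ := ℓ) hν0 hν1).continuousOn.comp_continuous (by fun_prop)
      fun y => by simp [Real.pi_pos.le]
  have hii : IntervalIntegrable (fun y : ℝ => stripFun ν ℓ (R + y * Complex.I)) volume 0 Real.pi := by
    refine (hcont.intervalIntegrable 0 Real.pi).congr fun y hy => ?_
    rw [uIoc_of_le Real.pi_pos.le] at hy
    simp [min_eq_left hy.2, max_eq_right hy.1.le]
  have hconst : (-(Real.pi * β : ℝ) : ℂ) = ∫ y in (0 : ℝ)..Real.pi, (-β : ℂ) := by
    simp
  rw [stripSide, hconst, ← intervalIntegral.integral_sub hii (by simp)]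
  refine intervalIntegral.norm_integral_le_of_norm_le_const fun y hy => ?_
  set s : ℂ := R + y * Complex.I with hs
  have hsre : s.re = R := by simp [hs]
  have hsl : s ≠ ℓ := fun h => hR.ne' (by rw [← hsre, h]; simp)
  have hE := norm_exp_sub_exp_ge (ℓ := ℓ) s
  rw [hsre, abs_of_pos (sub_pos.2 hlt)] at hE
  have hE0 : 0 < ‖Complex.exp s - Complex.exp ℓ‖ := lt_of_lt_of_le (sub_pos.2 hlt) hE
  have hQ := norm_one_add_exp_ge (ν := ν) s
  rw [hsre, abs_of_pos (by linarith)] at hQ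
  have hval : stripFun ν ℓ s - -β = (Complex.exp (ν * s) / (1 + Complex.exp (ν * s))
      - (β * Real.exp ℓ : ℝ)) / (Complex.exp s - Complex.exp ℓ) := by
    rw [stripFun_of_ne hsl, stripNum]
    have := norm_pos_iff.1 hE0
    field_simp
    push_cast
    ring
  rw [hval, norm_div]
  refine div_le_div₀ (by positivity) ((norm_sub_le _ _).trans (add_le_add ?_ ?_))
    (sub_pos.2 hlt) hE
  · rw [norm_div, Complex.norm_exp, div_le_iff₀ (by linarith)]
    simp [hsre]
    linarith
  · rw [Complex.norm_real, Real.norm_of_nonneg (by positivity)]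

lemma tendsto_stripSide_atBot (hν0 : 0 < ν) :
    Tendsto (fun R : ℝ => stripSide ν ℓ R) atBot (𝓝 0) := by
  set β := poleValue ν ℓ with hβ
  have hβ0 : 0 < β := poleValue_pos
  have t1 : Tendsto (fun R : ℝ => Real.exp (ν * R)) atBot (𝓝 0) :=
    Real.tendsto_exp_atBot.comp (tendsto_id.const_mul_atBot hν0)
  have t2 := Real.tendsto_exp_atBot
  have hb : Tendsto (fun R : ℝ => (2 * Real.exp (ν * R) + β * Real.exp R) /
      (Real.exp ℓ - Real.exp R) * |Real.pi - 0|) atBot (𝓝 0) := by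
    have := (((t1.const_mul 2).add (t2.const_mul β)).div (t2.const_sub (Real.exp ℓ))
      (by simp [Real.exp_ne_zero])).mul_const |Real.pi - 0|
    simpa using this
  refine squeeze_zero_norm' ?_ hb
  filter_upwards [t1.eventually_le_const (show (0 : ℝ) < 1 / 2 by norm_num), eventually_lt_atBot ℓ]
    with R h2 hR
  have hlt : Real.exp R < Real.exp ℓ := Real.exp_lt_exp.2 hR
  rw [stripSide]
  refine intervalIntegral.norm_integral_le_of_norm_le_const fun y hy => ?_
  set s : ℂ := R + y * Complex.I with hs
  have hsre : s.re = R := by simp [hs]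
  have hsl : s ≠ ℓ := fun h => hR.ne (by rw [← hsre, h]; simp)
  have hE := norm_exp_sub_exp_ge (ℓ := ℓ) s
  rw [hsre, abs_sub_comm, abs_of_pos (sub_pos.2 hlt)] at hE
  have hQ := norm_one_add_exp_ge (ν := ν) s
  rw [hsre, abs_sub_comm, abs_of_pos (by linarith)] at hQ
  rw [stripFun_of_ne hsl, stripNum, norm_div]
  refine div_le_div₀ (by positivity) ((norm_sub_le _ _).trans (add_le_add ?_ ?_))
    (sub_pos.2 hlt) hE
  · rw [norm_div, Complex.norm_exp, div_le_iff₀ (by linarith)]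
    simp [hsre]
    nlinarith [Real.exp_pos (ν * R)]
  · rw [norm_mul, Complex.norm_exp, hsre, Complex.norm_real, Real.norm_of_nonneg hβ0.le]

end Strip

/-! ### The spectral kernel and its Stieltjes transform -/

/-- The function `r^(ν-1) / (r^(2ν) + 2 r^ν cos(νπ) + 1)`; multiplied by `sin(νπ)/π` it is the
density of the measure of which `s ↦ E_{ν,1}(-s^ν)` is the Laplace transform. -/
noncomputable def spectralKernel (ν r : ℝ) : ℝ :=
  r ^ (ν - 1) / (r ^ (2 * ν) + 2 * r ^ ν * Real.cos (ν * Real.pi) + 1)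

lemma rpow_two_mul_eq {r : ℝ} (hr : 0 ≤ r) (ν : ℝ) : r ^ (2 * ν) = (r ^ ν) ^ 2 := by
  rw [mul_comm, Real.rpow_mul hr, Real.rpow_two]

/-- The kernel is integrable: `arctan ((r^ν + cos νπ) / sin νπ) / (ν sin νπ)` is a bounded
primitive. -/
lemma integrableOn_spectralKernel {ν : ℝ} (hν0 : 0 < ν) (hν1 : ν < 1) :
    IntegrableOn (spectralKernel ν) (Ioi 0) := by
  have hσ := sin_mul_pi_pos hν0 hν1
  have hcs := Real.sin_sq_add_cos_sq (ν * Real.pi)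
  have hq := quad_pos hν0 hν1
  have hd : ∀ r : ℝ, 0 < r → HasDerivAt (fun r : ℝ =>
      Real.arctan ((r ^ ν + Real.cos (ν * Real.pi)) / Real.sin (ν * Real.pi))
        / (ν * Real.sin (ν * Real.pi))) (spectralKernel ν r) r := by
    intro r hr
    have h := ((((Real.hasDerivAt_rpow_const (p := ν) (Or.inl hr.ne')).add_const
      (Real.cos (ν * Real.pi))).div_const (Real.sin (ν * Real.pi))).arctan).div_const
        (ν * Real.sin (ν * Real.pi))
    refine h.congr_deriv ?_
    rw [spectralKernel, rpow_two_mul_eq hr.le]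
    have hq := hq (r ^ ν)
    generalize Real.sin (ν * Real.pi) = σ at *
    generalize Real.cos (ν * Real.pi) = c at *
    generalize r ^ ν = u at *
    have h1 : 1 + ((u + c) / σ) ^ 2 = (u ^ 2 + 2 * u * c + 1) / σ ^ 2 := by
      field_simp
      linear_combination hcs
    rw [h1]
    field_simp
  refine (integral_Ioi_of_hasDerivAt_of_tendsto_nhdsGT hd ?_ (?_ : Tendsto _ _
    (𝓝 (Real.arctan ((0 + Real.cos (ν * Real.pi)) / Real.sin (ν * Real.pi))
        / (ν * Real.sin (ν * Real.pi))))) (?_ : Tendsto _ _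
    (𝓝 (Real.pi / 2 / (ν * Real.sin (ν * Real.pi)))))).1
  · intro r hr
    rw [spectralKernel, rpow_two_mul_eq hr.le]
    exact div_nonneg (Real.rpow_nonneg hr.le _) (hq _).le
  · have h0 : Tendsto (fun r : ℝ => r ^ ν) (𝓝[>] 0) (𝓝 0) := by
      have := (Real.continuousAt_rpow_const 0 ν (Or.inr hν0.le)).tendsto
      rw [Real.zero_rpow hν0.ne'] at this
      exact this.mono_left nhdsWithin_le_nhds
    exact ((Real.continuous_arctan.tendsto _).comp
      ((h0.add_const _).div_const _)).div_const _
  · exact ((tendsto_nhds_of_tendsto_nhdsWithin Real.tendsto_arctan_atTop).comp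
      ((tendsto_atTop_add_const_right _ _ (tendsto_rpow_atTop hν0)).atTop_div_const hσ)).div_const _

lemma integrableOn_spectralKernel_div {ν w : ℝ} (hν0 : 0 < ν) (hν1 : ν < 1) (hw : 0 < w) :
    IntegrableOn (fun r => spectralKernel ν r / (r + w)) (Ioi 0) := by
  simp only [div_eq_mul_inv]
  refine (integrableOn_spectralKernel hν0 hν1).mul_bdd (c := w⁻¹) ?_ ?_
  · exact (by fun_prop : Measurable fun r : ℝ => (r + w)⁻¹).aestronglyMeasurable
  · filter_upwards [ae_restrict_mem measurableSet_Ioi] with r (hr : 0 < r)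
    rw [Real.norm_of_nonneg (by positivity)]
    exact inv_anti₀ hw (by linarith)

/-- The Stieltjes transform of the kernel, from Cauchy's theorem in the logarithmic
coordinate. -/
lemma integral_spectralKernel_div {ν w : ℝ} (hν0 : 0 < ν) (hν1 : ν < 1) (hw : 0 < w) :
    Real.sin (ν * Real.pi) / Real.pi * ∫ r in Ioi 0, spectralKernel ν r / (r + w)
      = w ^ (ν - 1) / (1 + w ^ ν) := by
  set ℓ := Real.log w with hℓ
  have hwℓ : Real.exp ℓ = w := Real.exp_log hw
  have himage : Real.exp '' univ = Ioi 0 := by rw [image_univ, Real.range_exp]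
  have hder : ∀ x ∈ (univ : Set ℝ), HasDerivWithinAt Real.exp (Real.exp x) univ x :=
    fun x _ => (Real.hasDerivAt_exp x).hasDerivWithinAt
  have hfun : (fun x => |Real.exp x| • (spectralKernel ν (Real.exp x) / (Real.exp x + w)))
      = logKernel ν ℓ := by
    ext x
    have e1 : Real.exp x ^ (ν - 1) = Real.exp (ν * x) / Real.exp x := by
      rw [Real.rpow_sub_one (Real.exp_pos x).ne', ← Real.exp_mul, mul_comm]
    rw [spectralKernel, logKernel, rpow_two_mul_eq (Real.exp_pos x).le, e1, ← Real.exp_mul,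
      mul_comm x ν, hwℓ, abs_of_pos (Real.exp_pos x), smul_eq_mul]
    have := (Real.exp_pos x).ne'
    field_simp
  have hint : Integrable (logKernel ν ℓ) := by
    have h := (integrableOn_image_iff_integrableOn_abs_deriv_smul MeasurableSet.univ hder
      Real.exp_injective.injOn (fun r => spectralKernel ν r / (r + w))).1
        (by rw [himage]; exact integrableOn_spectralKernel_div hν0 hν1 hw)
    rw [hfun] at h
    exact integrableOn_univ.1 h
  have heq := integral_image_eq_integral_abs_deriv_smul MeasurableSet.univ hder
    Real.exp_injective.injOn (fun r => spectralKernel ν r / (r + w))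
  rw [himage, hfun, setIntegral_univ] at heq
  have hlim := (intervalIntegral_tendsto_integral hint tendsto_neg_atTop_atBot
    tendsto_id).const_mul (Real.sin (ν * Real.pi))
  have hlim' : Tendsto (fun R : ℝ => (stripSide ν ℓ (-R)).re - (stripSide ν ℓ R).re) atTop
      (𝓝 ((0 : ℂ).re - (-(Real.pi * poleValue ν ℓ : ℝ) : ℂ).re)) :=
    ((Complex.continuous_re.tendsto _).comp
      ((tendsto_stripSide_atBot hν0).comp tendsto_neg_atTop_atBot)).sub
      ((Complex.continuous_re.tendsto _).comp (tendsto_stripSide_atTop hν0 hν1))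
  have h := tendsto_nhds_unique (hlim.congr fun R => sin_mul_integral_logKernel hν0 hν1) hlim'
  rw [heq, div_mul_eq_mul_div, h, ← Complex.ofReal_neg, Complex.ofReal_re, Complex.zero_re,
    zero_sub, neg_neg, mul_div_cancel_left₀ _ Real.pi_ne_zero, poleValue, hwℓ,
    Real.rpow_sub_one hw.ne', Real.rpow_def_of_pos hw, ← hℓ, mul_comm ν ℓ]
  ring

/-! ### The spectral representation by comparison of Laplace transforms -/

/-- The Laplace transform of the Mittag-Leffler function, integrating the series termwise where
the resulting geometric series converges. -/
lemma laplace_mittagLeffler {ν lam z : ℝ} (hν0 : 0 < ν) (hlam : 0 < lam) (hz : 0 < z)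
    (hlz : lam < z ^ ν) :
    ∫ s in Ioi 0, Real.exp (-(z * s)) * mittagLeffler ν 1 (-lam * s ^ ν)
      = z ^ (ν - 1) / (lam + z ^ ν) := by
  have hzν : 0 < z ^ ν := Real.rpow_pos_of_pos hz _
  have hk : ∀ k : ℕ, 0 < ν * k + 1 := fun k => by positivity
  have hΓ : ∀ k : ℕ, 0 < Real.Gamma (ν * k + 1) := fun k => Real.Gamma_pos_of_pos (hk k)
  have hterm : ∀ k : ℕ, ∀ s ∈ Ioi (0 : ℝ), ∀ b : ℝ,
      Real.exp (-(z * s)) * ((b * s ^ ν) ^ k / Real.Gamma (ν * k + 1))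
        = b ^ k / Real.Gamma (ν * k + 1) * (s ^ (ν * k + 1 - 1) * Real.exp (-(z * s))) := by
    intro k s hs b
    rw [add_sub_cancel_right, Real.rpow_mul (le_of_lt hs), Real.rpow_natCast, mul_pow]
    ring
  have hI : ∀ (k : ℕ) (b : ℝ), ∫ s in Ioi 0,
      Real.exp (-(z * s)) * ((b * s ^ ν) ^ k / Real.Gamma (ν * k + 1)) = 1 / z * (b / z ^ ν) ^ k := by
    intro k b
    rw [setIntegral_congr_fun measurableSet_Ioi (fun s hs => hterm k s hs b), integral_const_mul,
      Real.integral_rpow_mul_exp_neg_mul_Ioi (hk k) hz, Real.rpow_add (by positivity),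
      Real.rpow_one, Real.rpow_mul (by positivity), Real.rpow_natCast,
      Real.div_rpow zero_le_one hz.le, Real.one_rpow]
    have := (hΓ k).ne'
    rw [show b / z ^ ν = b * (1 / z ^ ν) by ring, mul_pow]
    field_simp
  have hr : |(-lam) / z ^ ν| < 1 := by
    rw [abs_div, abs_neg, abs_of_pos hlam, abs_of_pos hzν, div_lt_one hzν]
    exact hlz
  have hs := hasSum_integral_of_summable_integral_norm (μ := volume.restrict (Ioi 0))
    (F := fun (k : ℕ) s => Real.exp (-(z * s)) * ((-lam * s ^ ν) ^ k / Real.Gamma (ν * k + 1)))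
    (fun k => ?_) ?_
  · simp only [hI, tsum_mul_left] at hs
    have hg := (hasSum_geometric_of_abs_lt_one hr).mul_left (1 / z)
    refine (hs.unique hg).trans ?_
    rw [Real.rpow_sub_one hz.ne']
    have : lam + z ^ ν ≠ 0 := by positivity
    have h2 : 1 - -lam / z ^ ν = (lam + z ^ ν) / z ^ ν := by
      field_simp
      ring
    rw [h2]
    field_simp
  · refine Integrable.of_integral_ne_zero ?_
    rw [hI]
    have : -lam / z ^ ν ≠ 0 := div_ne_zero (neg_ne_zero.2 hlam.ne') hzν.ne'
    positivity
  · have hn : ∀ k : ℕ, ∫ s in Ioi 0,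
        ‖Real.exp (-(z * s)) * ((-lam * s ^ ν) ^ k / Real.Gamma (ν * k + 1))‖
          = 1 / z * (lam / z ^ ν) ^ k := by
      intro k
      rw [← hI k lam]
      refine setIntegral_congr_fun measurableSet_Ioi fun s (hs : 0 < s) => ?_
      have h1 : 0 < s ^ ν := Real.rpow_pos_of_pos hs _
      simp [abs_of_pos (hΓ k), abs_of_pos hlam, abs_of_pos h1]
    simp only [hn]
    exact (summable_geometric_of_lt_one (by positivity) ((div_lt_one hzν).2 hlz)).mul_left _

/-- A function whose Laplace transform vanishes along an arithmetic progression of step `1` is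
almost everywhere zero: in the coordinate `y = e^{-s}` all its moments vanish, so by Weierstrass
approximation it is orthogonal to every test function. -/
lemma ae_eq_zero_of_laplace_eq_zero {D : ℝ → ℝ} {z₀ : ℝ}
    (hint : IntegrableOn (fun s => Real.exp (-(z₀ * s)) * D s) (Ioi 0))
    (h0 : ∀ n : ℕ, ∫ s in Ioi 0, Real.exp (-((z₀ + n) * s)) * D s = 0) :
    ∀ᵐ s ∂(volume : Measure ℝ), s ∈ Ioi 0 → D s = 0 := by
  set E : ℝ → ℝ := fun s => Real.exp (-(z₀ * s)) * D s with hE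
  have hmom : ∀ n : ℕ, ∫ s in Ioi 0, Real.exp (-s) ^ n * E s = 0 := by
    intro n
    refine (setIntegral_congr_fun measurableSet_Ioi fun s _ => ?_).trans (h0 n)
    simp only [hE]
    rw [← Real.exp_nat_mul, ← mul_assoc, ← Real.exp_add]
    ring_nf
  have hbdd : ∀ φ : ℝ → ℝ, Continuous φ → ∀ C, (∀ y ∈ Icc (0 : ℝ) 1, |φ y| ≤ C) →
      IntegrableOn (fun s => φ (Real.exp (-s)) * E s) (Ioi 0) := by
    intro φ hφ C hC
    refine hint.bdd_mul (c := C) (by fun_prop) ?_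
    filter_upwards [ae_restrict_mem measurableSet_Ioi] with s (hs : 0 < s)
    exact hC _ ⟨(Real.exp_pos _).le, Real.exp_le_one_iff.2 (by linarith)⟩
  have hbdd' : ∀ φ : ℝ → ℝ, Continuous φ →
      IntegrableOn (fun s => φ (Real.exp (-s)) * E s) (Ioi 0) := by
    intro φ hφ
    obtain ⟨C, hC⟩ := isCompact_Icc.exists_bound_of_continuousOn (s := Icc (0 : ℝ) 1)
      hφ.continuousOn
    exact hbdd φ hφ C hC
  have hpoly : ∀ p : Polynomial ℝ, ∫ s in Ioi 0, p.eval (Real.exp (-s)) * E s = 0 := by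
    intro p
    simp only [Polynomial.eval_eq_sum_range, Finset.sum_mul, mul_assoc]
    rw [integral_finsetSum]
    · simp only [integral_const_mul, hmom, mul_zero, Finset.sum_const_zero]
    · intro n _
      exact (hbdd' (fun y => y ^ n) (by fun_prop)).const_mul _
  have hcont : ∀ φ : ℝ → ℝ, Continuous φ → ∫ s in Ioi 0, φ (Real.exp (-s)) * E s = 0 := by
    intro φ hφ
    set M := ∫ s in Ioi 0, ‖E s‖ with hM
    have hM0 : 0 ≤ M := integral_nonneg fun _ => norm_nonneg _
    have hle : ∀ ε : ℝ, 0 < ε → |∫ s in Ioi 0, φ (Real.exp (-s)) * E s| ≤ ε * M := by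
      intro ε hε
      obtain ⟨p, hp⟩ := exists_polynomial_near_of_continuousOn 0 1 φ hφ.continuousOn ε hε
      have hsub : ∫ s in Ioi 0, φ (Real.exp (-s)) * E s
          = ∫ s in Ioi 0, (φ (Real.exp (-s)) - p.eval (Real.exp (-s))) * E s := by
        simp only [sub_mul]
        rw [integral_sub (hbdd' φ hφ) (hbdd' _ p.continuous), hpoly, sub_zero]
      rw [hsub, hM, ← integral_const_mul, ← Real.norm_eq_abs]
      refine norm_integral_le_of_norm_le (hint.norm.const_mul ε) ?_
      filter_upwards [ae_restrict_mem measurableSet_Ioi] with s (hs : 0 < s)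
      rw [norm_mul, norm_sub_rev]
      exact mul_le_mul_of_nonneg_right
        (hp _ ⟨(Real.exp_pos _).le, Real.exp_le_one_iff.2 (by linarith)⟩).le (norm_nonneg _)
    by_contra hne
    have hpos := abs_pos.2 hne
    have h := hle (|∫ s in Ioi 0, φ (Real.exp (-s)) * E s| / (2 * (M + 1))) (by positivity)
    rw [div_mul_eq_mul_div, le_div_iff₀ (by positivity)] at h
    nlinarith
  have hae : ∀ᵐ s ∂(volume : Measure ℝ), s ∈ Ioi 0 → E s = 0 := by
    refine isOpen_Ioi.ae_eq_zero_of_integral_contDiff_smul_eq_zero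
      hint.locallyIntegrableOn fun g hg hgc hgs => ?_
    have hg0 : ∀ x, x ∉ Ioi (0 : ℝ) → g x = 0 := fun x hx =>
      image_eq_zero_of_notMem_tsupport fun h => hx (hgs h)
    -- near `y = 0` the function vanishes because the support of `g` is bounded
    have hφ : Continuous fun y => g (-Real.log y) := by
      refine continuous_iff_continuousAt.2 fun y => ?_
      by_cases hy : y = 0
      · subst hy
        have hev : (fun y => g (-Real.log y)) =ᶠ[𝓝 0] fun _ => 0 := by
          have h1 : ∀ᶠ x in atTop, g x = 0 := by
            obtain ⟨B, hB⟩ := hgc.isCompact.bddAbove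
            filter_upwards [eventually_gt_atTop B] with x hx
            exact image_eq_zero_of_notMem_tsupport fun h => hx.not_ge (hB h)
          have h2 := (tendsto_neg_atBot_atTop.comp Real.tendsto_log_nhdsNE_zero).eventually h1
          rw [eventually_nhdsWithin_iff] at h2
          filter_upwards [h2] with x hx
          by_cases hx0 : x = 0
          · subst hx0
            exact hg0 _ (by simp)
          · exact hx hx0
        exact hev.continuousAt
      · exact hg.continuous.continuousAt.comp (Real.continuousAt_log hy).neg
    rw [← hcont _ hφ, ← setIntegral_eq_integral_of_forall_compl_eq_zero (s := Ioi (0 : ℝ))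
      fun x hx => by simp [hg0 x hx]]
    simp
  filter_upwards [hae] with s hs hs0
  exact (mul_eq_zero.1 (hs hs0)).resolve_left (Real.exp_ne_zero _)

/-- Fubini for the pairing of an integrable density with a Laplace-type kernel. -/
lemma integral_laplace_mul {K h : ℝ → ℝ} {a : ℝ} (ha : 0 ≤ a) (hK : IntegrableOn K (Ioi 0))
    (hh : IntegrableOn h (Ioi 0)) :
    ∫ s in Ioi 0, (∫ r in Ioi 0, K r * Real.exp (-(r * a * s))) * h s
      = ∫ r in Ioi 0, K r * ∫ s in Ioi 0, Real.exp (-(r * a * s)) * h s := by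
  have hprod : Integrable (Function.uncurry fun s r : ℝ => K r * Real.exp (-(r * a * s)) * h s)
      ((volume.restrict (Ioi 0)).prod (volume.restrict (Ioi 0))) := by
    have h1 := (hh.mul_prod hK).bdd_mul (c := 1)
      (f := fun p : ℝ × ℝ => Real.exp (-(p.2 * a * p.1))) (by fun_prop) ?_
    · refine h1.congr (Eventually.of_forall fun p => ?_)
      simp only [Function.uncurry]
      ring
    · rw [Measure.prod_restrict]
      filter_upwards [ae_restrict_mem (measurableSet_Ioi.prod measurableSet_Ioi)] with p hp
      rw [Real.norm_of_nonneg (Real.exp_pos _).le, Real.exp_le_one_iff]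
      have h1 : 0 < p.1 := hp.1
      have h2 : 0 < p.2 := hp.2
      have : 0 ≤ p.2 * a * p.1 := by positivity
      linarith
  calc _ = ∫ s in Ioi 0, ∫ r in Ioi 0, K r * Real.exp (-(r * a * s)) * h s := by
        simp only [integral_mul_const]
    _ = ∫ r in Ioi 0, ∫ s in Ioi 0, K r * Real.exp (-(r * a * s)) * h s :=
        integral_integral_swap hprod
    _ = _ := by simp only [mul_assoc, integral_const_mul]

/-- The right-hand side of the spectral representation of `E_{ν,1}(-λ s^ν)`, with
`a = λ^(1/ν)`. -/
noncomputable def spectralLaplace (ν a s : ℝ) : ℝ :=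
  Real.sin (ν * Real.pi) / Real.pi * ∫ r in Ioi 0, spectralKernel ν r * Real.exp (-(r * a * s))

lemma laplace_spectralLaplace {ν a z : ℝ} (hν0 : 0 < ν) (hν1 : ν < 1) (ha : 0 < a) (hz : 0 < z) :
    ∫ s in Ioi 0, Real.exp (-(z * s)) * spectralLaplace ν a s = z ^ (ν - 1) / (a ^ ν + z ^ ν) := by
  have hexp : ∀ b : ℝ, 0 < b → ∫ s in Ioi (0 : ℝ), Real.exp (-(b * s)) = 1 / b := by
    intro b hb
    have h := Real.integral_rpow_mul_exp_neg_mul_Ioi one_pos hb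
    simpa using h
  have hexpi : IntegrableOn (fun s => Real.exp (-(z * s))) (Ioi 0) :=
    Integrable.of_integral_ne_zero (by rw [hexp z hz]; positivity)
  have hF := integral_laplace_mul ha.le (integrableOn_spectralKernel hν0 hν1) hexpi
  have hin : ∀ r ∈ Ioi (0 : ℝ), spectralKernel ν r *
      ∫ s in Ioi 0, Real.exp (-(r * a * s)) * Real.exp (-(z * s))
        = 1 / a * (spectralKernel ν r / (r + z / a)) := by
    intro r hr
    have hr : 0 < r := hr
    have h1 : ∀ s, Real.exp (-(r * a * s)) * Real.exp (-(z * s))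
        = Real.exp (-((r * a + z) * s)) := by
      intro s
      rw [← Real.exp_add]
      ring_nf
    simp only [h1]
    rw [hexp _ (by positivity)]
    have : r + z / a ≠ 0 := by positivity
    field_simp
  have hS := integral_spectralKernel_div hν0 hν1 (div_pos hz ha)
  calc _ = Real.sin (ν * Real.pi) / Real.pi * ∫ s in Ioi 0,
        (∫ r in Ioi 0, spectralKernel ν r * Real.exp (-(r * a * s))) * Real.exp (-(z * s)) := by
        rw [← integral_const_mul]
        congr 1
        ext s
        rw [spectralLaplace]
        ring
    _ = 1 / a * (Real.sin (ν * Real.pi) / Real.pi *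
          ∫ r in Ioi 0, spectralKernel ν r / (r + z / a)) := by
        rw [hF, setIntegral_congr_fun measurableSet_Ioi hin, integral_const_mul]
        ring
    _ = _ := by
        rw [hS, Real.rpow_sub_one (by positivity), Real.rpow_sub_one hz.ne',
          Real.div_rpow hz.le ha.le]
        have h1 : 0 < a ^ ν := Real.rpow_pos_of_pos ha _
        have h2 : 0 < z ^ ν := Real.rpow_pos_of_pos hz _
        field_simp

/-- The spectral representation `E_{ν,1}(-λ s^ν) = (sin νπ/π) ∫ K(r) e^{-r λ^{1/ν} s} dr`, here for
almost every `s > 0`, by comparing Laplace transforms. -/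
lemma mittagLeffler_ae_eq_spectralLaplace {ν lam a : ℝ} (hν0 : 0 < ν) (hν1 : ν < 1)
    (ha : 0 < a) (haν : a ^ ν = lam) :
    ∀ᵐ s ∂(volume : Measure ℝ), s ∈ Ioi 0 →
      mittagLeffler ν 1 (-lam * s ^ ν) = spectralLaplace ν a s := by
  have hlam : 0 < lam := haν ▸ Real.rpow_pos_of_pos ha _
  have hL1 : ∀ z, a < z → ∫ s in Ioi 0, Real.exp (-(z * s)) * mittagLeffler ν 1 (-lam * s ^ ν)
      = z ^ (ν - 1) / (lam + z ^ ν) := fun z hz =>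
    laplace_mittagLeffler hν0 hlam (ha.trans hz) (haν ▸ Real.rpow_lt_rpow ha.le hz hν0)
  have hL2 : ∀ z, a < z → ∫ s in Ioi 0, Real.exp (-(z * s)) * spectralLaplace ν a s
      = z ^ (ν - 1) / (lam + z ^ ν) := fun z hz =>
    haν ▸ laplace_spectralLaplace hν0 hν1 ha (ha.trans hz)
  have hne : ∀ z, a < z → z ^ (ν - 1) / (lam + z ^ ν) ≠ 0 := by
    intro z hz
    have hz0 : 0 < z := ha.trans hz
    positivity
  -- a nonzero Bochner integral certifies integrability
  have hi1 : ∀ z, a < z → IntegrableOn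
      (fun s => Real.exp (-(z * s)) * mittagLeffler ν 1 (-lam * s ^ ν)) (Ioi 0) := fun z hz =>
    Integrable.of_integral_ne_zero (by rw [hL1 z hz]; exact hne z hz)
  have hi2 : ∀ z, a < z → IntegrableOn
      (fun s => Real.exp (-(z * s)) * spectralLaplace ν a s) (Ioi 0) := fun z hz =>
    Integrable.of_integral_ne_zero (by rw [hL2 z hz]; exact hne z hz)
  have h := ae_eq_zero_of_laplace_eq_zero (z₀ := a + 1)
    (D := fun s => mittagLeffler ν 1 (-lam * s ^ ν) - spectralLaplace ν a s) ?_ ?_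
  · filter_upwards [h] with s hs hs0
    exact sub_eq_zero.1 (hs hs0)
  · simp only [mul_sub]
    exact (hi1 _ (by linarith)).sub (hi2 _ (by linarith))
  · intro n
    have hn : a < a + 1 + n := by
      have : (0 : ℝ) ≤ n := n.cast_nonneg
      linarith
    simp only [mul_sub]
    rw [integral_sub (hi1 _ hn) (hi2 _ hn), hL1 _ hn, hL2 _ hn, sub_self]

/-- Key integral computation for the fractional birth process stopped at the
Brownian first-passage time `T_t` (proof of Theorem 3.3). -/
theorem mittagLeffler_first_passage_integral (ν lam t : ℝ) (hν0 : 0 < ν) (hν1 : ν < 1)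
    (hlam : 0 < lam) (ht : 0 < t) :
    ∫ s in Set.Ioi (0 : ℝ),
        mittagLeffler ν 1 (-lam * s ^ ν) *
          (t * Real.exp (-t ^ 2 / (2 * s)) / Real.sqrt (2 * Real.pi * s ^ 3))
      = (Real.sin (ν * Real.pi) / Real.pi) *
          ∫ r in Set.Ioi (0 : ℝ),
            r ^ (ν - 1) * Real.exp (-t * Real.sqrt (2 * r * lam ^ (1 / ν))) /
              (r ^ (2 * ν) + 2 * r ^ ν * Real.cos (ν * Real.pi) + 1) := by
  set a := lam ^ (1 / ν) with ha
  have ha0 : 0 < a := Real.rpow_pos_of_pos hlam _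
  have haν : a ^ ν = lam := by
    rw [ha, ← Real.rpow_mul hlam.le, one_div_mul_cancel hν0.ne', Real.rpow_one]
  have hq : IntegrableOn (passageDensity t) (Ioi 0) := by
    simpa using (laplace_passageDensity ht le_rfl).1
  calc _ = ∫ s in Ioi 0, spectralLaplace ν a s * passageDensity t s := by
        refine setIntegral_congr_ae measurableSet_Ioi ?_
        filter_upwards [mittagLeffler_ae_eq_spectralLaplace hν0 hν1 ha0 haν] with s hs hs0
        rw [hs hs0, passageDensity]
    _ = Real.sin (ν * Real.pi) / Real.pi * ∫ s in Ioi 0,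
          (∫ r in Ioi 0, spectralKernel ν r * Real.exp (-(r * a * s))) * passageDensity t s := by
        simp only [spectralLaplace, mul_assoc, integral_const_mul]
    _ = _ := by
        rw [integral_laplace_mul ha0.le (integrableOn_spectralKernel hν0 hν1) hq]
        congr 1
        refine setIntegral_congr_fun measurableSet_Ioi fun r (hr : 0 < r) => ?_
        -- the Laplace parameter `r a` of the passage time is `m² / 2` for `m = √(2ra)`
        have h := (laplace_passageDensity ht (Real.sqrt_nonneg (2 * r * a))).2
        rw [Real.sq_sqrt (by positivity), show 2 * r * a / 2 = r * a by ring] at h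
        simp only [h, spectralKernel, neg_mul]
        ring
end

section
/- Let λ > 0 and t > 0. Then ∫_0^∞ E_{1/2,1}(−λ √s) · t·e^{−t²/(2s)}/√(2π s³) ds = (2√2·t/π) · ∫_0^∞ e^{−λ s}/(s² + 2t²) ds, where E_{1/2,1}(x) = ∑_{h=0}^∞ x^h/Γ(h/2+1). -/
/-!
The function `E_{1/2,1}(-λ√s)` is the Laplace transform at `λ` of `|B(2s)|` for a Brownian motion
`B` (`mittagLeffler_half_neg`): the moments of the half-normal law (`half_normal_moment`) turn the
coefficients `1/h!` of the exponential series into `1/Γ(h/2+1)` by the duplication formula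
(`gamma_half_div_factorial`). Hence the left-hand side is a double integral in `(s, y)`. After an
application of Fubini's theorem (`integrable_jointDensity`), the inner integral over `s` is
`∫ exp(-a/s) s⁻² ds = 1/a` with `a = y²/4 + t²/2` (`integral_inv_gamma`), which is the Cauchy
density in `y` up to a constant. In probabilistic terms: a Brownian motion evaluated at an
independent first-passage time is a Cauchy process.
-/

open MeasureTheory

lemma half_normal_moment {s : ℝ} (hs : 0 < s) (h : ℕ) :
    ∫ y in Set.Ioi (0 : ℝ), y ^ h * Real.exp (-y ^ 2 / (4 * s))
      = (2 * √s) ^ (h + 1) / 2 * Real.Gamma ((h + 1) / 2) := by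
  have hb : 0 < (4 * s)⁻¹ := by positivity
  have key := integral_rpow_mul_exp_neg_mul_rpow (p := 2) (q := h) (b := (4 * s)⁻¹)
    two_pos (by have : (0 : ℝ) ≤ h := Nat.cast_nonneg h
                linarith) hb
  have hpow : (4 * s)⁻¹ ^ (-((h : ℝ) + 1) / 2) = (2 * √s) ^ (h + 1) := by
    have h4 : 4 * s = (2 * √s) ^ (2 : ℝ) := by
      rw [Real.rpow_two, mul_pow, Real.sq_sqrt hs.le]; norm_num
    have h0 : 0 ≤ 2 * √s := by positivity
    rw [Real.inv_rpow (by positivity), ← Real.rpow_neg (by positivity), h4, ← Real.rpow_mul h0,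
      ← Real.rpow_natCast]
    congr 1
    push_cast
    ring
  rw [hpow] at key
  rw [show (2 * √s) ^ (h + 1) / 2 * Real.Gamma (((h : ℝ) + 1) / 2)
    = (2 * √s) ^ (h + 1) * (1 / 2) * Real.Gamma (((h : ℝ) + 1) / 2) by ring, ← key]
  refine integral_congr_ae (Filter.Eventually.of_forall fun y => ?_)
  simp only [Real.rpow_natCast, Real.rpow_two]
  congr 2
  ring

/-- A form of the duplication formula: this constant turns the `h`-th term of the exponential series,
averaged over a half-normal law, into the `h`-th coefficient of `E_{1/2,1}`. -/
lemma gamma_half_div_factorial (h : ℕ) :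
    2 ^ h * Real.Gamma ((h + 1) / 2) / (h.factorial * √Real.pi)
      = 1 / Real.Gamma (1 / 2 * h + 1) := by
  have key := Real.Gamma_mul_Gamma_add_half (((h : ℝ) + 1) / 2)
  rw [show ((h : ℝ) + 1) / 2 + 1 / 2 = 1 / 2 * h + 1 by ring,
    show 2 * (((h : ℝ) + 1) / 2) = h + 1 by ring, Real.Gamma_nat_eq_factorial,
    show (1 : ℝ) - (h + 1) = -(h : ℝ) by ring, Real.rpow_neg two_pos.le, Real.rpow_natCast] at key
  have hG : Real.Gamma (1 / 2 * (h : ℝ) + 1) ≠ 0 := (Real.Gamma_pos_of_pos (by positivity)).ne'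
  have hf : (h.factorial : ℝ) ≠ 0 := by positivity
  have hpi : √Real.pi ≠ 0 := by positivity
  rw [div_eq_div_iff (by positivity) hG, mul_assoc, key]
  field_simp

lemma integrable_exp_mul_half_normal (lam : ℝ) {s : ℝ} (hs : 0 < s) :
    IntegrableOn (fun y => Real.exp (lam * y) * Real.exp (-y ^ 2 / (4 * s))) (Set.Ioi 0) := by
  have h := (integrable_exp_neg_mul_sq (b := (8 * s)⁻¹) (by positivity)).const_mul
    (Real.exp (2 * s * lam ^ 2))
  refine (h.mono' (by fun_prop) (Filter.Eventually.of_forall fun y => ?_)).integrableOn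
  rw [Real.norm_eq_abs, abs_of_pos (by positivity), ← Real.exp_add, ← Real.exp_add]
  refine Real.exp_le_exp.2 ?_
  -- The constant `2sλ²` completes the square.
  have h1 : 2 * s * lam ^ 2 + -(8 * s)⁻¹ * y ^ 2 - (lam * y + -y ^ 2 / (4 * s))
      = (8 * s)⁻¹ * (y - 4 * s * lam) ^ 2 := by
    field_simp
    ring
  have h2 : 0 ≤ (8 * s)⁻¹ * (y - 4 * s * lam) ^ 2 := by positivity
  linarith

/-- `E_{1/2,1}(-λ√s)` is the Laplace transform at `λ` of the half-normal density
`exp(-y²/(4s))/√(πs)` on `(0, ∞)`, i.e. `E[exp(-λ|B(2s)|)]`. The exponential series is integrated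
term by term; dominated convergence applies because the series of absolute values sums to
`exp(|λ|y)`, which the Gaussian factor makes integrable. -/
lemma mittagLeffler_half_neg (lam : ℝ) {s : ℝ} (hs : 0 < s) :
    mittagLeffler (1 / 2) 1 (-lam * √s)
      = ∫ y in Set.Ioi (0 : ℝ),
          Real.exp (-lam * y) * Real.exp (-y ^ 2 / (4 * s)) / √(Real.pi * s) := by
  have hexp : ∀ x : ℝ, HasSum (fun h : ℕ => x ^ h / h.factorial) (Real.exp x) := fun x => by
    rw [Real.exp_eq_exp_ℝ]
    exact NormedSpace.expSeries_div_hasSum_exp x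
  have hsum : ∀ x y : ℝ, HasSum (fun h : ℕ => (x * y) ^ h / h.factorial *
      Real.exp (-y ^ 2 / (4 * s))) (Real.exp (x * y) * Real.exp (-y ^ 2 / (4 * s))) :=
    fun x y => (hexp (x * y)).mul_right _
  have key := hasSum_integral_of_dominated_convergence
    (μ := volume.restrict (Set.Ioi (0 : ℝ)))
    (F := fun (h : ℕ) y => (-lam * y) ^ h / h.factorial * Real.exp (-y ^ 2 / (4 * s)))
    (f := fun y => Real.exp (-lam * y) * Real.exp (-y ^ 2 / (4 * s)))
    (fun h y => (|lam| * y) ^ h / h.factorial * Real.exp (-y ^ 2 / (4 * s)))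
    (fun h => by fun_prop)
    (fun h => by
      filter_upwards [ae_restrict_mem measurableSet_Ioi] with y hy
      have hy : 0 < y := hy
      simp [abs_of_pos hy])
    (Filter.Eventually.of_forall fun y => (hsum |lam| y).summable)
    (by
      simp_rw [fun y => (hsum |lam| y).tsum_eq]
      exact integrable_exp_mul_half_normal |lam| hs)
    (Filter.Eventually.of_forall fun y => hsum (-lam) y)
  rw [integral_div, ← key.tsum_eq, ← tsum_div_const, mittagLeffler]
  congr 1
  ext h
  have e : ∀ y : ℝ, (-lam * y) ^ h / h.factorial * Real.exp (-y ^ 2 / (4 * s))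
      = (-lam) ^ h / h.factorial * (y ^ h * Real.exp (-y ^ 2 / (4 * s))) := fun y => by
    rw [mul_pow]; ring
  simp_rw [e]
  rw [integral_const_mul, half_normal_moment hs, div_eq_mul_one_div, ← gamma_half_div_factorial,
    Real.sqrt_mul Real.pi_pos.le]
  have : √s ≠ 0 := by positivity
  have hpi : √Real.pi ≠ 0 := by positivity
  have hf : (h.factorial : ℝ) ≠ 0 := by positivity
  rw [mul_pow (-lam) (√s), mul_pow 2 (√s)]
  field_simp
  ring

/-- The total mass of an unnormalised inverse exponential law; the substitution `s ↦ s⁻¹` reduces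
it to `∫ exp(-a u) du`. -/
lemma integral_inv_gamma {a : ℝ} (ha : 0 < a) :
    IntegrableOn (fun s : ℝ => Real.exp (-a / s) / s ^ 2) (Set.Ioi 0) ∧
      ∫ s in Set.Ioi (0 : ℝ), Real.exp (-a / s) / s ^ 2 = 1 / a := by
  have e : Set.EqOn (fun s : ℝ => (|(-1 : ℝ)| * s ^ ((-1 : ℝ) - 1)) • Real.exp (-a * s ^ (-1 : ℝ)))
      (fun s => Real.exp (-a / s) / s ^ 2) (Set.Ioi 0) := fun s hs => by
    have hs : 0 < s := hs
    have h2 : s ^ ((-1 : ℝ) - 1) = (s ^ 2)⁻¹ := by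
      rw [show (-1 : ℝ) - 1 = -(2 : ℝ) by norm_num, Real.rpow_neg hs.le, Real.rpow_two]
    simp only [h2, Real.rpow_neg_one, smul_eq_mul, abs_neg, abs_one]
    rw [div_eq_mul_inv (-a)]
    ring
  constructor
  · refine IntegrableOn.congr_fun ?_ e measurableSet_Ioi
    exact (integrableOn_Ioi_comp_rpow_iff (fun x => Real.exp (-a * x)) (by norm_num)).2
      (exp_neg_integrableOn_Ioi 0 ha)
  · rw [← setIntegral_congr_fun measurableSet_Ioi e,
      integral_comp_rpow_Ioi (fun x => Real.exp (-a * x)) (by norm_num),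
      integral_exp_mul_Ioi (by linarith)]
    simp

/-- The Laplace kernel `exp(-λy)` times the joint density in `(s, y)` of the first-passage time `T_t`
and of `|B(2 T_t)|`, with `B` a Brownian motion independent of `T_t`. The exponents
`-y²/(4s)` and `-t²/(2s)` are merged into one fraction over `s`. -/
noncomputable def jointDensity (lam t s y : ℝ) : ℝ :=
  t / (√2 * Real.pi) * Real.exp (-lam * y) *
    (Real.exp (-(y ^ 2 / 4 + t ^ 2 / 2) / s) / s ^ 2)

/-- Integrating out the first-passage time leaves the density of `|C(√2 t)|`. -/
lemma integral_jointDensity (lam : ℝ) {t : ℝ} (ht : 0 < t) (y : ℝ) :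
    ∫ s in Set.Ioi (0 : ℝ), jointDensity lam t s y
      = 2 * √2 * t / Real.pi * (Real.exp (-lam * y) / (y ^ 2 + 2 * t ^ 2)) := by
  simp only [jointDensity]
  rw [integral_const_mul, (integral_inv_gamma (by positivity)).2]
  have h2 : √2 ^ 2 = (2 : ℝ) := Real.sq_sqrt two_pos.le
  have : y ^ 2 + 2 * t ^ 2 ≠ 0 := by positivity
  have hpi := Real.pi_ne_zero
  rw [show y ^ 2 / 4 + t ^ 2 / 2 = (y ^ 2 + 2 * t ^ 2) / 4 by ring]
  field_simp
  rw [h2]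
  norm_num

/-- The integrand is nonnegative, so integrability follows from that of its `s`-marginal, which is
at most a constant times `exp(-λy)`. -/
lemma integrable_jointDensity {lam t : ℝ} (hlam : 0 < lam) (ht : 0 < t) :
    Integrable (Function.uncurry (jointDensity lam t))
      ((volume.restrict (Set.Ioi 0)).prod (volume.restrict (Set.Ioi 0))) := by
  have hm : Measurable (Function.uncurry (jointDensity lam t)) := by
    unfold Function.uncurry jointDensity
    fun_prop
  have hnn : ∀ s y, 0 ≤ jointDensity lam t s y := fun s y => by
    unfold jointDensity; positivity
  rw [integrable_prod_iff' hm.aestronglyMeasurable]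
  refine ⟨Filter.Eventually.of_forall fun y => ?_, ?_⟩
  · exact (integral_inv_gamma (a := y ^ 2 / 4 + t ^ 2 / 2) (by positivity)).1.const_mul
      (t / (√2 * Real.pi) * Real.exp (-lam * y))
  · simp only [Function.uncurry_apply_pair, Real.norm_of_nonneg (hnn _ _),
      integral_jointDensity lam ht]
    refine Integrable.const_mul ?_ _
    refine Integrable.mono' ((exp_neg_integrableOn_Ioi 0 hlam).mul_const (1 / (2 * t ^ 2)))
      (by fun_prop : Measurable _).aestronglyMeasurable (Filter.Eventually.of_forall fun y => ?_)
    rw [Real.norm_of_nonneg (by positivity), div_eq_mul_one_div]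
    gcongr
    nlinarith [sq_nonneg y]

/-- The half-normal density with variance `2s`, weighted by the Laplace kernel, times the first-passage
density is the joint density. -/
lemma firstPassage_mul_eq (lam t : ℝ) {s : ℝ} (hs : 0 < s) (y : ℝ) :
    Real.exp (-lam * y) * Real.exp (-y ^ 2 / (4 * s)) / √(Real.pi * s) *
        (t * Real.exp (-t ^ 2 / (2 * s)) / √(2 * Real.pi * s ^ 3))
      = jointDensity lam t s y := by
  have hr : √(Real.pi * s) * √(2 * Real.pi * s ^ 3) = √2 * Real.pi * s ^ 2 := by
    rw [← Real.sqrt_mul (by positivity), show Real.pi * s * (2 * Real.pi * s ^ 3)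
      = 2 * (Real.pi * s ^ 2) ^ 2 by ring, Real.sqrt_mul two_pos.le, Real.sqrt_sq (by positivity)]
    ring
  have he : Real.exp (-(y ^ 2 / 4 + t ^ 2 / 2) / s)
      = Real.exp (-y ^ 2 / (4 * s)) * Real.exp (-t ^ 2 / (2 * s)) := by
    rw [← Real.exp_add]
    congr 1
    field_simp
    ring
  rw [div_mul_div_comm, hr, jointDensity, he, div_mul_eq_mul_div, div_mul_div_comm]
  congr 1
  ring

/-- Identity of Remark 3.4: `N^{1/2}(T_t) = N(|C(√2 t)|)` at the level of
Laplace-type functionals. -/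
theorem half_fractional_first_passage_eq_cauchy (lam t : ℝ) (hlam : 0 < lam) (ht : 0 < t) :
    ∫ s in Set.Ioi (0 : ℝ),
        mittagLeffler (1 / 2) 1 (-lam * Real.sqrt s) *
          (t * Real.exp (-t ^ 2 / (2 * s)) / Real.sqrt (2 * Real.pi * s ^ 3))
      = (2 * Real.sqrt 2 * t / Real.pi) *
          ∫ s in Set.Ioi (0 : ℝ), Real.exp (-lam * s) / (s ^ 2 + 2 * t ^ 2) := by
  calc
    _ = ∫ s in Set.Ioi (0 : ℝ), ∫ y in Set.Ioi (0 : ℝ), jointDensity lam t s y := by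
      refine setIntegral_congr_fun measurableSet_Ioi fun s hs => ?_
      have hs : 0 < s := hs
      simp only [mittagLeffler_half_neg lam hs, ← integral_mul_const, firstPassage_mul_eq lam t hs]
    _ = ∫ y in Set.Ioi (0 : ℝ), ∫ s in Set.Ioi (0 : ℝ), jointDensity lam t s y :=
      integral_integral_swap (integrable_jointDensity hlam ht)
    _ = _ := by
      simp only [integral_jointDensity lam ht, integral_const_mul]
end
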